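/- arXiv:2102.11106 — 8 statements merged into one kernel-verified Lean document; each statement's English description precedes it below -/
import Mathlib

section
/- For every integer N there exist k ∈ ℕ and digits d_0, d_1, …, d_k ∈ {0,1,2} such that N = (1/2)·∑_{i=0}^{k} d_i·(−3/2)^i. -/
/-!
Put `β = -p / q` with `0 < q < p`. Euclidean division of `q * N` by `p`, written
`q * N = c - p * M` with a digit `0 ≤ c < p`, reads `q * N = c + β * (q * M)`: an expansion of
`N` is `c` followed by an expansion of `M`. Since `M` is close to `-(q / p) * N`, passing from `N`
to `M` brings one down the list `0, 1, -1, 2, -2, …`, so the procedure ends at `0`.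
-/

/-- The integers are ordered as `0, 1, -1, 2, -2, …` by the values of `|3 * N - 1|`; measuring by
`|N|` fails at `N = -1`, which can lead to `M = 1`. -/
theorem natAbs_three_mul_sub_one_lt {p q N c M : ℤ} (hq : 0 ≤ q) (hqp : q < p) (hc : 0 ≤ c)
    (hcp : c < p) (hN : N ≠ 0) (h : q * N = c - p * M) :
    (3 * M - 1).natAbs < (3 * N - 1).natAbs := by
  have hp : 0 < p := hq.trans_lt hqp
  rcases lt_or_gt_of_ne hN with hneg | hpos
  · have hM_nonneg : -1 < M := lt_of_mul_lt_mul_left (a := p) (by nlinarith) hp.le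
    have hM_le : M < 1 - N := lt_of_mul_lt_mul_left (a := p) (by nlinarith) hp.le
    omega
  · have hM_nonpos : M < 1 := lt_of_mul_lt_mul_left (a := p) (by nlinarith) hp.le
    have hM_gt : -N < M := lt_of_mul_lt_mul_left (a := p) (by nlinarith) hp.le
    omega

theorem exists_natCast_mul_intCast_eq_ofDigits {R : Type*} [Ring R] {p q : ℕ} (hqp : q < p)
    {β : R} (hβ : β * q = -p) (N : ℤ) :
    ∃ L : List ℕ, (∀ c ∈ L, c < p) ∧ (q : R) * N = Nat.ofDigits β L := by
  induction hn : (3 * N - 1).natAbs using Nat.strong_induction_on generalizing N with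
  | _ n ih =>
    subst hn
    rcases eq_or_ne N 0 with rfl | hN
    · exact ⟨[], by simp, by simp [Nat.ofDigits]⟩
    have hp : (0 : ℤ) < p := by omega
    obtain ⟨c, hc⟩ := Int.eq_ofNat_of_zero_le (Int.emod_nonneg (q * N) hp.ne')
    have hcp : (c : ℤ) < p := hc ▸ Int.emod_lt_of_pos (q * N) hp
    obtain ⟨M, hM⟩ : ∃ M : ℤ, q * N = c - p * M :=
      ⟨-(q * N / p), by linarith [Int.emod_add_mul_ediv (q * N) p]⟩
    have hlt : (3 * M - 1).natAbs < (3 * N - 1).natAbs :=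
      natAbs_three_mul_sub_one_lt (by positivity) (by exact_mod_cast hqp) (by positivity) hcp hN hM
    obtain ⟨L, hL, hML⟩ := ih _ hlt M rfl
    refine ⟨c :: L, List.forall_mem_cons.mpr ⟨by exact_mod_cast hcp, hL⟩, ?_⟩
    calc (q : R) * N = c - p * M := by exact_mod_cast congrArg (Int.cast : ℤ → R) hM
      _ = c + β * (q * M) := by rw [← mul_assoc, hβ, neg_mul, sub_eq_add_neg]
      _ = Nat.ofDigits β (c :: L) := by rw [hML, Nat.ofDigits]

theorem ofDigits_eq_sum_range_getD {R : Type*} [Semiring R] (b : R) (L : List ℕ) {n : ℕ}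
    (hn : L.length ≤ n) :
    Nat.ofDigits b L = ∑ i ∈ Finset.range n, (L.getD i 0 : R) * b ^ i := by
  induction L generalizing n with
  | nil => simp [Nat.ofDigits]
  | cons c L ih =>
    obtain ⟨m, rfl⟩ : ∃ m, n = m + 1 := Nat.exists_eq_add_one.mpr (Nat.zero_lt_of_lt hn)
    have hshift (i : ℕ) : b * (L.getD i 0 * b ^ i) = L.getD i 0 * b ^ (i + 1) := by
      rw [pow_succ', ← mul_assoc, ← mul_assoc, (Nat.cast_commute _ b).eq]
    rw [Nat.ofDigits, ih (Nat.le_of_succ_le_succ hn), Finset.sum_range_succ', Finset.mul_sum,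
      add_comm]
    simp only [hshift, List.getD_cons_succ, List.getD_cons_zero, pow_zero, mul_one]

theorem integer_has_neg_three_halves_expansion_general {K : Type*} [DivisionRing K] {p q : ℕ}
    (hq : (q : K) ≠ 0) (hqp : q < p) (N : ℤ) :
    ∃ (k : ℕ) (d : ℕ → ℕ), (∀ i ≤ k, d i < p) ∧
      (N : K) = (1 / q) * ∑ i ∈ Finset.range (k + 1), (d i : K) * (-p / q) ^ i := by
  obtain ⟨L, hL, hN⟩ := exists_natCast_mul_intCast_eq_ofDigits hqp (div_mul_cancel₀ (-p : K) hq) N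
  refine ⟨L.length, fun i ↦ L.getD i 0, fun i _ ↦ ?_, ?_⟩
  · rcases lt_or_ge i L.length with hi | hi
    · simpa only [List.getD_eq_getElem _ _ hi] using hL _ (List.getElem_mem hi)
    · simpa only [List.getD_eq_default _ _ hi] using Nat.zero_lt_of_lt hqp
  · rw [← ofDigits_eq_sum_range_getD _ _ (Nat.le_succ _), ← hN, one_div, inv_mul_cancel_left₀ hq]

/-- Every integer `N` has an integer `(-3/2)`-expansion:
there exist `k ∈ ℕ` and digits `d 0, …, d k ∈ {0,1,2}` such that
`N = (1/2) · ∑_{i=0}^{k} d i · (-3/2)^i`. -/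
theorem integer_has_neg_three_halves_expansion (N : ℤ) :
    ∃ (k : ℕ) (d : ℕ → ℕ), (∀ i ≤ k, d i ≤ 2) ∧
      (N : ℚ) = (1 / 2) * ∑ i ∈ Finset.range (k + 1), (d i : ℚ) * (-3 / 2) ^ i := by
  simpa [Nat.lt_succ_iff] using
    integer_has_neg_three_halves_expansion_general (K := ℚ) (p := 3) (q := 2) two_ne_zero
      (by decide) N
end

section
/- The integer (−3/2)-expansion of an integer is unique: if (1/2)·∑_{i=0}^{k} d_i·(−3/2)^i = (1/2)·∑_{i=0}^{k} e_i·(−3/2)^i with all d_i, e_i ∈ {0,1,2} (padding the shorter expansion with zeros), then d_i = e_i for all i. -/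
/-!
Two expansions of the same number in base `r` differ by a polynomial that has `r` as a root. By the
rational root theorem applied to the reversed polynomial, the numerator of `r` divides the lowest
nonzero difference of digits; but distinct digits are incongruent modulo the numerator. For
`r = -3/2` the numerator is `-3`, and `0, 1, 2` are incongruent modulo `3`.
-/

open IsFractionRing Polynomial

section RationalBase

variable {A K : Type*} [CommRing A] [IsDomain A] [UniqueFactorizationMonoid A] [Field K]
  [Algebra A K] [IsFractionRing A K] {r : K}

theorem num_dvd_trailingCoeff_of_aeval_eq_zero {p : A[X]} (hr : r ≠ 0) (hp : aeval r p = 0) :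
    num A r ∣ p.trailingCoeff := by
  have : Invertible r := invertibleOfNonzero hr
  have hrev : aeval r⁻¹ p.reverse = 0 := by
    simpa only [invOf_eq_inv, aeval_def] using
      (eval₂_reverse_eq_zero_iff (algebraMap A K) r p).mpr hp
  calc
    num A r ∣ (den A r⁻¹ : A) := (associated_num_den_inv r hr).dvd
    _ ∣ p.reverse.leadingCoeff := den_dvd_of_is_root hrev
    _ = p.trailingCoeff := reverse_leadingCoeff p

theorem eq_zero_of_aeval_eq_zero_of_num_dvd_coeff {p : A[X]} (hr : r ≠ 0)
    (hp : aeval r p = 0) (hcoeff : ∀ i, num A r ∣ p.coeff i → p.coeff i = 0) : p = 0 :=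
  trailingCoeff_eq_zero.mp (hcoeff _ (num_dvd_trailingCoeff_of_aeval_eq_zero hr hp))

theorem integer_neg_three_halves_expansion_unique_general {n : ℕ} {d e : ℕ → A} (hr : r ≠ 0)
    (hde : ∀ i < n, num A r ∣ d i - e i → d i = e i)
    (hsum : ∑ i ∈ Finset.range n, algebraMap A K (d i) * r ^ i =
      ∑ i ∈ Finset.range n, algebraMap A K (e i) * r ^ i) :
    ∀ i < n, d i = e i := by
  let p : A[X] := ∑ i ∈ Finset.range n, monomial i (d i - e i)
  have coeff_p (i : ℕ) : p.coeff i = if i < n then d i - e i else 0 := by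
    simp [p, finsetSum_coeff, coeff_monomial, -map_sub]
  have root_p : aeval r p = 0 := by
    simp [p, aeval_monomial, hsum]
  have p_eq_zero : p = 0 := by
    refine eq_zero_of_aeval_eq_zero_of_num_dvd_coeff hr root_p fun i hdvd ↦ ?_
    rw [coeff_p] at hdvd ⊢
    split_ifs at hdvd ⊢ with hi
    · exact sub_eq_zero.mpr (hde i hi hdvd)
    · rfl
  intro i hi
  simpa [coeff_p, hi, sub_eq_zero] using congr_arg (coeff · i) p_eq_zero

end RationalBase

theorem num_neg_three_halves_dvd_iff {c : ℤ} : num ℤ (-3 / 2 : ℚ) ∣ c ↔ 3 ∣ c := by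
  have num_eq : (-3 / 2 : ℚ).num = -3 := by norm_num
  rw [(Rat.isFractionRingNum _).dvd_iff_dvd_left, num_eq, neg_dvd]

theorem ternary_digit_eq_of_num_neg_three_halves_dvd_sub {a b : ℕ} (ha : a ≤ 2) (hb : b ≤ 2)
    (h : num ℤ (-3 / 2 : ℚ) ∣ (a : ℤ) - b) : (a : ℤ) = b := by
  rw [num_neg_three_halves_dvd_iff] at h
  omega

/-- The integer `(-3/2)`-expansion of an integer is unique:
if `(1/2)·∑_{i=0}^{k} d i·(-3/2)^i = (1/2)·∑_{i=0}^{k} e i·(-3/2)^i` is an integer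
with all `d i, e i ∈ {0,1,2}` (padding with zeros), then `d i = e i` for all `i ≤ k`. -/
theorem integer_neg_three_halves_expansion_unique (N : ℤ) (k : ℕ) (d e : ℕ → ℕ)
    (hd : ∀ i ≤ k, d i ≤ 2) (he : ∀ i ≤ k, e i ≤ 2)
    (hNd : (N : ℚ) = (1 / 2) * ∑ i ∈ Finset.range (k + 1), (d i : ℚ) * (-3 / 2) ^ i)
    (hNe : (N : ℚ) = (1 / 2) * ∑ i ∈ Finset.range (k + 1), (e i : ℚ) * (-3 / 2) ^ i) :
    ∀ i ≤ k, d i = e i := by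
  have hsum : ∑ i ∈ Finset.range (k + 1), algebraMap ℤ ℚ (d i) * (-3 / 2) ^ i =
      ∑ i ∈ Finset.range (k + 1), algebraMap ℤ ℚ (e i) * (-3 / 2) ^ i := by
    simpa using hNd.symm.trans hNe
  simp only [← Nat.lt_succ_iff (n := k)] at hd he ⊢
  exact_mod_cast integer_neg_three_halves_expansion_unique_general (by norm_num)
    (fun i hi ↦ ternary_digit_eq_of_num_neg_three_halves_dvd_sub (hd i hi) (he i hi)) hsum
end

section
/- For every integer N and every d ∈ {0,1,2}, there is exactly one integer N' with 2N = −3N' + d if and only if d ≡ 2N (mod 3); consequently the digit algorithm 2N_i = −3N_{i+1} + d_i (d_i ∈ {0,1,2}) is well defined and, starting from any N_0 ∈ ℤ, produces a sequence (N_i) that is eventually zero. -/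
/-!
In base `-p/q` with `0 ≤ q < p` and digits `0, …, p - 1`, the step `q * N = -p * N' + d` sends
`N > 0` into `(-N, 0]` and `N < 0` into `[0, -N]`. Hence `|N|` may stall at negative `N`, but the
distance `|N - 1/4|`, for which `-M` counts as slightly larger than `M`, strictly decreases until
the fixed point `0` is reached.
-/

/-- One step `N ↦ N'` of the digit algorithm in base `-p/q` with digit set `{0, …, p - 1}`. The
digit is existentially quantified, since termination depends only on the integers `N` and `N'`. -/
def IsDigitStep (p q N N' : ℤ) : Prop :=
  ∃ d ∈ Set.Ico 0 p, q * N = -p * N' + d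

theorem existsUnique_eq_neg_mul_add_iff_modEq {p : ℤ} (hp : p ≠ 0) (a d : ℤ) :
    (∃! N' : ℤ, a = -p * N' + d) ↔ d ≡ a [ZMOD p] := by
  rw [Int.modEq_comm, Int.modEq_iff_dvd]
  constructor
  · rintro ⟨N', hN', -⟩
    exact ⟨N', by linear_combination -hN'⟩
  · rintro ⟨N', hN'⟩
    refine ⟨N', by linear_combination -hN', fun M hM ↦ mul_left_cancel₀ hp ?_⟩
    linear_combination hN' + hM

namespace IsDigitStep

variable {p q N N' : ℤ}

theorem mem_Ioc_of_pos (h : IsDigitStep p q N N') (hq : 0 ≤ q) (hqp : q < p) (hN : 0 < N) :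
    N' ∈ Set.Ioc (-N) 0 := by
  obtain ⟨d, ⟨hd₀, hdp⟩, hstep⟩ := h
  have hp : 0 < p := hd₀.trans_lt hdp
  have hqN : 0 ≤ q * N := mul_nonneg hq hN.le
  have hqpN : q * N < p * N := mul_lt_mul_of_pos_right hqp hN
  have lower : p * -N < p * N' := by linarith
  have upper : p * N' < p * 1 := by linarith
  exact ⟨lt_of_mul_lt_mul_left lower hp.le,
    Int.lt_add_one_iff.mp (lt_of_mul_lt_mul_left upper hp.le)⟩

theorem mem_Icc_of_neg (h : IsDigitStep p q N N') (hq : 0 ≤ q) (hqp : q < p) (hN : N < 0) :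
    N' ∈ Set.Icc 0 (-N) := by
  obtain ⟨d, ⟨hd₀, hdp⟩, hstep⟩ := h
  have hp : 0 < p := hd₀.trans_lt hdp
  have hqN : q * N ≤ 0 := mul_nonpos_of_nonneg_of_nonpos hq hN.le
  have hpqN : p * N < q * N := mul_lt_mul_of_neg_right hqp hN
  have lower : p * 0 ≤ p * N' := by linarith
  have upper : p * N' < p * (-N + 1) := by linarith
  exact ⟨le_of_mul_le_mul_left lower hp,
    Int.lt_add_one_iff.mp (lt_of_mul_lt_mul_left upper hp.le)⟩

theorem eq_zero (h : IsDigitStep p q 0 N') : N' = 0 := by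
  obtain ⟨d, ⟨hd₀, hdp⟩, hstep⟩ := h
  have hd : d = p * N' := by linear_combination -hstep
  have hd_zero : d = 0 := Int.eq_zero_of_dvd_of_nonneg_of_lt hd₀ hdp ⟨N', hd⟩
  exact (mul_eq_zero.mp (hd.symm.trans hd_zero)).resolve_left (hd₀.trans_lt hdp).ne'

theorem natAbs_four_mul_sub_one_lt (h : IsDigitStep p q N N') (hq : 0 ≤ q) (hqp : q < p)
    (hN : N ≠ 0) : (4 * N' - 1).natAbs < (4 * N - 1).natAbs := by
  rcases hN.lt_or_gt with hneg | hpos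
  · obtain ⟨lower, upper⟩ := h.mem_Icc_of_neg hq hqp hneg
    omega
  · obtain ⟨lower, upper⟩ := h.mem_Ioc_of_pos hq hqp hpos
    omega

theorem exists_eq_zero {N : ℕ → ℤ} (h : ∀ i, IsDigitStep p q (N i) (N (i + 1)))
    (hq : 0 ≤ q) (hqp : q < p) : ∃ k, N k = 0 := by
  by_contra! hN
  have decreasing : StrictAnti fun i ↦ (4 * N i - 1).natAbs :=
    strictAnti_nat_of_succ_lt fun i ↦ (h i).natAbs_four_mul_sub_one_lt hq hqp (hN i)
  exact not_strictAnti_of_wellFoundedLT _ decreasing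

theorem eq_zero_of_le {N : ℕ → ℤ} (h : ∀ i, IsDigitStep p q (N i) (N (i + 1)))
    {k i : ℕ} (hk : N k = 0) (hki : k ≤ i) : N i = 0 := by
  induction i, hki using Nat.le_induction with
  | base => exact hk
  | succ i _ hi => exact (hi ▸ h i).eq_zero

end IsDigitStep

theorem digit_algorithm_well_defined_and_terminates_general {p q : ℤ} (hq : 0 ≤ q) (hqp : q < p) :
    (∀ N d : ℤ, (∃! N' : ℤ, q * N = -p * N' + d) ↔ d ≡ q * N [ZMOD p]) ∧
    (∀ (N : ℕ → ℤ) (d : ℕ → ℤ), (∀ i, d i ∈ Set.Ico 0 p) →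
      (∀ i, q * N i = -p * N (i + 1) + d i) →
      ∃ k : ℕ, ∀ i ≥ k, N i = 0) := by
  refine ⟨fun N d ↦ existsUnique_eq_neg_mul_add_iff_modEq (hq.trans_lt hqp).ne' (q * N) d,
    fun N d hd hN ↦ ?_⟩
  have hstep (i : ℕ) : IsDigitStep p q (N i) (N (i + 1)) := ⟨d i, hd i, hN i⟩
  obtain ⟨k, hk⟩ := IsDigitStep.exists_eq_zero hstep hq hqp
  exact ⟨k, fun i hi ↦ IsDigitStep.eq_zero_of_le hstep hk hi⟩

/-- For every `N ∈ ℤ` and every `d ∈ {0,1,2}`, there is exactly one `N' ∈ ℤ`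
with `2N = -3N' + d` if and only if `d ≡ 2N (mod 3)`; consequently the digit algorithm
`2·N i = -3·N (i+1) + d i` (with `d i ∈ {0,1,2}`) is well defined and, starting from any
`N 0 ∈ ℤ`, produces a sequence `N` that is eventually zero. -/
theorem digit_algorithm_well_defined_and_terminates :
    (∀ N : ℤ, ∀ d ∈ ({0, 1, 2} : Set ℤ),
      (∃! N' : ℤ, 2 * N = -3 * N' + d) ↔ d ≡ 2 * N [ZMOD 3]) ∧
    (∀ (N : ℕ → ℤ) (d : ℕ → ℤ), (∀ i, d i ∈ ({0, 1, 2} : Set ℤ)) →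
      (∀ i, 2 * N i = -3 * N (i + 1) + d i) →
      ∃ k : ℕ, ∀ i ≥ k, N i = 0) := by
  have digits_eq : ({0, 1, 2} : Set ℤ) = Set.Ico 0 3 := by
    ext
    simp only [Set.mem_insert_iff, Set.mem_singleton_iff, Set.mem_Ico]
    omega
  obtain ⟨step_iff, terminates⟩ := digit_algorithm_well_defined_and_terminates_general
    (show (0 : ℤ) ≤ 2 by norm_num) (show (2 : ℤ) < 3 by norm_num)
  exact ⟨fun N d _ ↦ step_iff N d, digits_eq ▸ terminates⟩
end

section
/- A rational number x admits an integer (−3/2)-expansion if and only if x ∈ ℤ[1/2], i.e., the set {(1/2)·∑_{i=0}^{k} d_i·(−3/2)^i : k ∈ ℕ, d_i ∈ {0,1,2}} equals ℤ[1/2]. -/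
/-!
If `q * x = c - p * y` for a digit `c`, then prepending `c` to a `(-p/q)`-expansion of `y` gives one
of `x`. On integers, division with remainder yields such a relation with `y = -⌊q * x / p⌋`. Since
`q < p`, this `y` is smaller than `x` in absolute value when `x > 0`, and it is nonnegative and no
larger in absolute value when `x < 0`; hence two steps always make progress and every integer has an
expansion. For `x = a / q ^ (l + 1)`, coprimality of `p` and `q` lets one choose `c` with
`c * q ^ l ≡ a` modulo `p`, and then `y` has denominator `q ^ l`.
-/

open Finset

variable {K : Type*} [Field K] {p q : ℕ}

/-- `x` admits an integer `(-p/q)`-expansion: a finite expansion in base `-p/q` with digits in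
`{0, …, p - 1}` and the prefactor `1/q` customary for rational bases. Leading digits may vanish. -/
def HasNegExpansion (p q : ℕ) (x : K) : Prop :=
  ∃ (k : ℕ) (d : ℕ → ℕ), (∀ i ≤ k, d i < p) ∧
    x = (1 / q) * ∑ i ∈ range (k + 1), (d i : K) * (-p / q) ^ i

theorem sum_range_mul_div_pow (f : ℕ → K) (r : K) {s : K} (hs : s ≠ 0) (n : ℕ) :
    ∑ i ∈ range n, f i * (r / s) ^ i = (∑ i ∈ range n, f i * r ^ i * s ^ (n - i)) / s ^ n := by
  rw [sum_div]
  refine sum_congr rfl fun i hi => ?_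
  have hpow : s ^ n = s ^ (n - i) * s ^ i := (pow_sub_mul_pow s (mem_range.mp hi).le).symm
  rw [hpow, div_pow]
  field_simp

theorem exists_lt_eq_mul_sub_mul (hp : 0 < p) {m : ℕ} (h : m.Coprime p) (a : ℤ) :
    ∃ c < p, ∃ b : ℤ, a = c * m - p * b := by
  have : NeZero p := ⟨hp.ne'⟩
  let c : ℕ := ((a : ZMod p) * (m : ZMod p)⁻¹).val
  have hdvd : (p : ℤ) ∣ c * m - a := by
    rw [← ZMod.intCast_zmod_eq_zero_iff_dvd]
    simp [c, mul_assoc, mul_comm (m : ZMod p)⁻¹, ZMod.coe_mul_inv_eq_one m h]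
  obtain ⟨b, hb⟩ := hdvd
  exact ⟨c, ZMod.val_lt _, b, by linarith⟩

namespace HasNegExpansion

theorem zero (hp : 0 < p) : HasNegExpansion p q (0 : K) :=
  ⟨0, fun _ => 0, fun _ _ => hp, by simp⟩

theorem of_mul_eq_sub_mul (hq : (q : K) ≠ 0) {x y : K} {c : ℕ} (hc : c < p)
    (hy : HasNegExpansion p q y) (hxy : q * x = c - p * y) : HasNegExpansion p q x := by
  obtain ⟨k, d, hd, rfl⟩ := hy
  refine ⟨k + 1, fun i => Nat.casesOn i c d, ?_, ?_⟩
  · rintro (_ | i) hi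
    · exact hc
    · exact hd i (Nat.le_of_succ_le_succ hi)
  · have hcons : ∑ i ∈ range (k + 2), ((Nat.casesOn i c d : ℕ) : K) * (-p / q) ^ i =
        c + -p / q * ∑ i ∈ range (k + 1), (d i : K) * (-p / q) ^ i := by
      rw [sum_range_succ', mul_sum, add_comm, pow_zero, mul_one]
      exact congrArg ((c : K) + ·) (sum_congr rfl fun i _ => by ring)
    rw [hcons, one_div_mul_eq_div, eq_div_iff hq, mul_comm x, hxy]
    ring

theorem intCast_of_ediv_eq_neg (hp : 0 < p) (hq : (q : K) ≠ 0) {a b : ℤ}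
    (hab : q * a / p = -b) (hb : HasNegExpansion p q (b : K)) : HasNegExpansion p q (a : K) := by
  have hp' : (0 : ℤ) < p := mod_cast hp
  obtain ⟨c, hc⟩ := Int.eq_ofNat_of_zero_le (Int.emod_nonneg (q * a) hp'.ne')
  have hcp : c < p := by
    have hlt := Int.emod_lt_of_pos (q * a) hp'
    omega
  have hdiv : q * a = c - p * b := by
    have hrem := Int.emod_add_mul_ediv (q * a) p
    rw [hc, hab] at hrem
    linarith
  exact of_mul_eq_sub_mul hq hcp hb (mod_cast congrArg (Int.cast : ℤ → K) hdiv)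

theorem natCast_and_neg (hqp : q < p) (hq : (q : K) ≠ 0) (n : ℕ) :
    HasNegExpansion p q (n : K) ∧ HasNegExpansion p q (-n : K) := by
  have hp : 0 < p := q.zero_le.trans_lt hqp
  have hp' : (0 : ℤ) < p := mod_cast hp
  induction n using Nat.strong_induction_on with
  | h n ih =>
    obtain rfl | hn := n.eq_zero_or_pos
    · simpa using zero hp
    have hpos : HasNegExpansion p q (n : K) := by
      have hlt : q * n / p < n := Nat.div_lt_of_lt_mul (Nat.mul_lt_mul_of_pos_right hqp hn)
      have hquot : HasNegExpansion p q ((-(q * n / p : ℕ) : ℤ) : K) := by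
        simpa only [Int.cast_neg, Int.cast_natCast] using (ih _ hlt).2
      exact mod_cast intCast_of_ediv_eq_neg (a := n) hp hq (by simp) hquot
    refine ⟨hpos, ?_⟩
    obtain ⟨m, hm⟩ : ∃ m : ℕ, (q * -n / p : ℤ) = -m :=
      Int.exists_eq_neg_ofNat (Int.ediv_nonpos_of_nonpos_of_neg (by nlinarith) hp')
    have hmn : m ≤ n := by
      have hle : -(n : ℤ) ≤ q * -n / p := (Int.le_ediv_iff_mul_le hp').mpr (by nlinarith)
      omega
    have hquot : HasNegExpansion p q (m : K) := by
      obtain rfl | hlt := hmn.eq_or_lt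
      · exact hpos
      · exact (ih m hlt).1
    simpa using intCast_of_ediv_eq_neg hp hq hm (by simpa using hquot)

theorem intCast (hqp : q < p) (hq : (q : K) ≠ 0) (a : ℤ) : HasNegExpansion p q (a : K) := by
  obtain ⟨n, rfl | rfl⟩ := a.eq_nat_or_neg
  · simpa using (natCast_and_neg hqp hq n).1
  · simpa using (natCast_and_neg hqp hq n).2

theorem intCast_div_pow (hqp : q < p) (hcop : q.Coprime p) (hq : (q : K) ≠ 0) (a : ℤ) (l : ℕ) :
    HasNegExpansion p q ((a : K) / q ^ l) := by
  induction l generalizing a with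
  | zero => simpa using intCast hqp hq a
  | succ l ih =>
    obtain ⟨c, hc, b, rfl⟩ :=
      exists_lt_eq_mul_sub_mul (q.zero_le.trans_lt hqp) (hcop.pow_left l) a
    refine of_mul_eq_sub_mul hq hc (ih b) ?_
    rw [pow_succ']
    push_cast
    field_simp

theorem exists_eq_intCast_div_pow (hq : (q : K) ≠ 0) {x : K} (hx : HasNegExpansion p q x) :
    ∃ (a : ℤ) (l : ℕ), x = (a : K) / q ^ l := by
  obtain ⟨k, d, -, rfl⟩ := hx
  refine ⟨∑ i ∈ range (k + 1), (d i : ℤ) * (-p) ^ i * q ^ (k + 1 - i), k + 2, ?_⟩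
  rw [sum_range_mul_div_pow _ _ hq, div_mul_div_comm, one_mul, ← pow_succ']
  push_cast
  rfl

end HasNegExpansion

theorem expansion_set_eq_dyadic_general (hqp : q < p) (hcop : q.Coprime p) (hq : (q : K) ≠ 0) :
    {x : K | HasNegExpansion p q x} = {x : K | ∃ (a : ℤ) (ℓ : ℕ), x = (a : K) / q ^ ℓ} := by
  ext x
  constructor
  · exact HasNegExpansion.exists_eq_intCast_div_pow hq
  · rintro ⟨a, ℓ, rfl⟩
    exact HasNegExpansion.intCast_div_pow hqp hcop hq a ℓ

/-- A rational number admits an integer `(-3/2)`-expansion iff it lies in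
`ℤ[1/2]`: the set of all numbers of the form `(1/2)·∑_{i=0}^{k} d i·(-3/2)^i` with
`k ∈ ℕ` and digits `d i ∈ {0,1,2}` equals the set of dyadic rationals `{a/2^ℓ}`. -/
theorem expansion_set_eq_dyadic :
    {x : ℚ | ∃ (k : ℕ) (d : ℕ → ℕ), (∀ i ≤ k, d i ≤ 2) ∧
        x = (1 / 2) * ∑ i ∈ Finset.range (k + 1), (d i : ℚ) * (-3 / 2) ^ i} =
      {x : ℚ | ∃ (a : ℤ) (ℓ : ℕ), x = (a : ℚ) / 2 ^ ℓ} := by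
  simpa [HasNegExpansion, Nat.lt_succ_iff] using
    expansion_set_eq_dyadic_general (K := ℚ) (p := 3) (q := 2) (by decide) (by decide) (by simp)
end

section
/- The set Ω of fractional parts of the number system (−3/2, {0,1,2}) satisfies the set equation (−3/2)·Ω = Ω ∪ (Ω + 1/2) ∪ (Ω + 1). -/
/-- The set `Ω` of fractional parts of the number system `(-3/2, {0,1,2})`:
all real numbers of the form `(1/2)·∑_{i=1}^{∞} d_{-i}·(-3/2)^{-i}` with digits
`d_{-i} ∈ {0,1,2}`. -/
def Omega : Set ℝ :=
  {x : ℝ | ∃ d : ℕ → ℕ, (∀ i, d i ≤ 2) ∧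
    HasSum (fun i : ℕ => (1 / 2 : ℝ) * (d i : ℝ) * (-3 / 2 : ℝ) ^ (-(i : ℤ) - 1)) x}

open scoped Pointwise

theorem hasSum_group_smul_iff {G E ι : Type*} [Group G] [AddCommMonoid E] [TopologicalSpace E]
    [DistribMulAction G E] [ContinuousConstSMul G E] {f : ι → E} {x : E} (b : G) :
    HasSum (fun i => b • f i) (b • x) ↔ HasSum f x :=
  ⟨fun h => by simpa only [inv_smul_smul] using h.const_smul b⁻¹, fun h => h.const_smul b⟩

section NumberSystem

variable {G E : Type*} [Group G] [AddCommGroup E] [TopologicalSpace E] [DistribMulAction G E]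

/-- The fractional parts of the number system with base `b` and digit set `D`: the sums of all
unconditionally convergent series `∑_{i ≥ 1} b^{-i} • d_{-i}` with digits in `D`. The digit
`d_{-i}` is stored as `d (i - 1)`. The base acts as an element of a group, which covers both nonzero
scalars and invertible matrices. -/
def fractionalParts (b : G) (D : Set E) : Set E :=
  {x | ∃ d : ℕ → E, (∀ i, d i ∈ D) ∧ HasSum (fun i : ℕ => b ^ (-(i : ℤ) - 1) • d i) x}

variable [ContinuousConstSMul G E] [IsTopologicalAddGroup E]

-- Multiplying by the base moves the leading digit in front of the radix point.
theorem hasSum_zpow_smul_iff_tail (b : G) (d : ℕ → E) (x : E) :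
    HasSum (fun i : ℕ => b ^ (-(i : ℤ) - 1) • d i) x ↔
      HasSum (fun i : ℕ => b ^ (-(i : ℤ) - 1) • d (i + 1)) (b • x - d 0) := by
  have smul_term (n : ℤ) (e : E) : b • b ^ (n - 1) • e = b ^ n • e := by
    rw [smul_smul, ← zpow_one_add, add_sub_cancel]
  rw [← hasSum_group_smul_iff b, ← hasSum_nat_add_iff' 1]
  simp only [smul_term, Finset.sum_range_one, Nat.cast_zero, neg_zero, zpow_zero, one_smul,
    Nat.cast_succ, neg_add']

theorem mem_fractionalParts_iff {b : G} {D : Set E} {x : E} :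
    x ∈ fractionalParts b D ↔ ∃ a ∈ D, b • x - a ∈ fractionalParts b D := by
  constructor
  · rintro ⟨d, digits_mem, sum_eq⟩
    exact ⟨d 0, digits_mem 0, fun i => d (i + 1), fun i => digits_mem (i + 1),
      (hasSum_zpow_smul_iff_tail b d x).mp sum_eq⟩
  · rintro ⟨a, a_mem, d, digits_mem, sum_eq⟩
    exact ⟨fun i => i.casesOn a d, fun i => i.casesOn a_mem digits_mem,
      (hasSum_zpow_smul_iff_tail b _ x).mpr sum_eq⟩

theorem Omega_set_equation_general (b : G) (D : Set E) :
    b • fractionalParts b D = fractionalParts b D + D := by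
  ext y
  calc y ∈ b • fractionalParts b D
      ↔ b⁻¹ • y ∈ fractionalParts b D := Set.mem_smul_set_iff_inv_smul_mem
    _ ↔ ∃ a ∈ D, y - a ∈ fractionalParts b D := by
        rw [mem_fractionalParts_iff, smul_inv_smul]
    _ ↔ y ∈ fractionalParts b D + D := by
        simp only [add_comm (fractionalParts b D), Set.mem_add, ← eq_sub_iff_add_eq',
          exists_eq_right]

end NumberSystem

theorem mem_zero_half_one_iff {t : ℝ} :
    t ∈ ({0, 1 / 2, 1} : Set ℝ) ↔ ∃ a : ℕ, a ≤ 2 ∧ 1 / 2 * (a : ℝ) = t := by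
  constructor
  · rintro (rfl | rfl | rfl)
    exacts [⟨0, by norm_num⟩, ⟨1, by norm_num⟩, ⟨2, by norm_num⟩]
  · rintro ⟨a, ha, rfl⟩
    interval_cases a <;> norm_num

theorem Omega_eq_fractionalParts {b : ℝˣ} (hb : (b : ℝ) = -3 / 2) :
    Omega = fractionalParts b {0, 1 / 2, 1} := by
  ext x
  simp only [Omega, fractionalParts, mem_zero_half_one_iff, Set.mem_ofPred_eq, Units.smul_def,
    Units.val_zpow_eq_zpow_val, hb, smul_eq_mul]
  constructor
  · rintro ⟨d, digits_le, sum_eq⟩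
    refine ⟨fun i => 1 / 2 * (d i : ℝ), fun i => ⟨d i, digits_le i, rfl⟩, ?_⟩
    simpa only [mul_comm] using sum_eq
  · rintro ⟨e, digits_mem, sum_eq⟩
    choose d digits_le digits_eq using digits_mem
    refine ⟨d, digits_le, ?_⟩
    simpa only [digits_eq, mul_comm] using sum_eq

/-- `Ω` satisfies the set equation `(-3/2)·Ω = Ω ∪ (Ω + 1/2) ∪ (Ω + 1)`. -/
theorem Omega_set_equation :
    (fun x : ℝ => (-3 / 2) * x) '' Omega =
      Omega ∪ (fun x : ℝ => x + 1 / 2) '' Omega ∪ (fun x : ℝ => x + 1) '' Omega := by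
  let b : ℝˣ := Units.mk0 (-3 / 2) (by norm_num)
  calc (fun x : ℝ => (-3 / 2) * x) '' Omega
      = b • Omega := rfl
    _ = Omega + {0, 1 / 2, 1} := by
        rw [Omega_eq_fractionalParts (b := b) rfl, Omega_set_equation_general]
    _ = Omega ∪ (fun x : ℝ => x + 1 / 2) '' Omega ∪ (fun x : ℝ => x + 1) '' Omega := by
        simp only [Set.insert_eq, Set.add_union, Set.add_singleton, add_zero, Set.image_id',
          Set.union_assoc]
end

section
/- The set Ω of fractional parts of the number system (−3/2, {0,1,2}) equals the closed interval [−6/5, 4/5]. -/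
/-!
The sums of the series `∑ rⁱ⁺¹ dᵢ` with digits in `D` form the attractor of the contractions
`x ↦ r (d + x)`, `d ∈ D`, where `|r| < 1`, so every nonempty, closed, bounded solution `K` of
`r (D + K) = K` is equal to it. For `D = {0, …, m}` the translates `k + [p - R, p + R]`, `k ∈ D`,
overlap as soon as `1 ≤ 2 R`, and their union is again an interval; hence an interval with `1 ≤ 2 R`
solves the equation when its midpoint and radius satisfy `p = r (m / 2 + p)` and
`R = |r| (m / 2 + R)`.
-/

open Filter Topology Metric
open scoped Pointwise

theorem sum_range_pow_smul_add_mem {M E : Type*} [Monoid M] [AddCommMonoid E]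
    [DistribMulAction M E] {r : M} {D K : Set E} (h : r • (D + K) ⊆ K) {d : ℕ → E}
    (hd : ∀ i, d i ∈ D) (n : ℕ) {z : E} (hz : z ∈ K) :
    ∑ i ∈ Finset.range n, r ^ (i + 1) • d i + r ^ n • z ∈ K := by
  induction n generalizing z with
  | zero => simpa using hz
  | succ n ih =>
    have hmem : r • (d n + z) ∈ K := h (Set.smul_mem_smul_set (Set.add_mem_add (hd n) hz))
    convert ih hmem using 1
    rw [Finset.sum_range_succ, smul_smul, ← pow_succ, smul_add, add_assoc]

section DigitSums

variable {𝕜 E : Type*} [NormedField 𝕜] [NormedAddCommGroup E] [NormedSpace 𝕜 E]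
  {r : 𝕜} {D K : Set E}

/-- The fractional parts in base `r⁻¹` with digit set `D`: the sums of the convergent series
`∑ rⁱ⁺¹ dᵢ` with all `dᵢ ∈ D`. The base enters through its inverse `r`, and digits are vectors,
so that a scaling of the digits is part of `D`. -/
def digitSums (r : 𝕜) (D : Set E) : Set E :=
  {x | ∃ d : ℕ → E, (∀ i, d i ∈ D) ∧ HasSum (fun i ↦ r ^ (i + 1) • d i) x}

theorem mem_digitSums_image {ι : Type*} {f : ι → E} {S : Set ι} {x : E} :
    x ∈ digitSums r (f '' S) ↔
      ∃ d : ℕ → ι, (∀ i, d i ∈ S) ∧ HasSum (fun i ↦ r ^ (i + 1) • f (d i)) x := by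
  constructor
  · rintro ⟨e, he, hx⟩
    choose d hdS hde using he
    exact ⟨d, hdS, by simpa only [hde] using hx⟩
  · rintro ⟨d, hd, hx⟩
    exact ⟨f ∘ d, fun i ↦ Set.mem_image_of_mem f (hd i), hx⟩

theorem digitSums_subset (hr : ‖r‖ < 1) (hne : K.Nonempty) (hK : IsClosed K)
    (h : r • (D + K) ⊆ K) : digitSums r D ⊆ K := by
  rintro x ⟨d, hd, hx⟩
  obtain ⟨z, hz⟩ := hne
  have hlim : Tendsto (fun n ↦ ∑ i ∈ Finset.range n, r ^ (i + 1) • d i + r ^ n • z)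
      atTop (𝓝 x) := by
    have hpow := (tendsto_pow_atTop_nhds_zero_of_norm_lt_one hr).smul_const z
    simpa using hx.tendsto_sum_nat.add hpow
  exact hK.mem_of_tendsto hlim (.of_forall fun n ↦ sum_range_pow_smul_add_mem h hd n hz)

theorem hasSum_pow_smul_sub_pow_succ_smul [CompleteSpace E] (hr : ‖r‖ < 1) {x : ℕ → E} {C : ℝ}
    (hx : ∀ i, ‖x i‖ ≤ C) : HasSum (fun i ↦ r ^ i • x i - r ^ (i + 1) • x (i + 1)) (x 0) := by
  have hsum : Summable fun i ↦ r ^ i • x i := by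
    refine .of_norm_bounded ((summable_geometric_of_lt_one (norm_nonneg r) hr).mul_right C)
      fun i ↦ ?_
    rw [norm_smul, norm_pow]
    gcongr
    exact hx i
  simpa using hsum.hasSum.sub ((hasSum_nat_add_iff' 1).mpr hsum.hasSum)

theorem subset_digitSums [CompleteSpace E] (hr : ‖r‖ < 1) (hK : Bornology.IsBounded K)
    (h : K ⊆ r • (D + K)) : K ⊆ digitSums r D := by
  intro x hx
  have hstep : ∀ y : K, ∃ d ∈ D, ∃ z : K, r • (d + z : E) = y := by
    rintro ⟨y, hy⟩
    obtain ⟨_, ⟨d, hd, z, hz, rfl⟩, hy⟩ := h hy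
    exact ⟨d, hd, ⟨z, hz⟩, hy⟩
  choose digit hdigit next hnext using hstep
  let orbit (n : ℕ) : K := next^[n] ⟨x, hx⟩
  obtain ⟨C, hC⟩ := hK.exists_norm_le
  have hterm (i : ℕ) : r ^ (i + 1) • digit (orbit i) =
      r ^ i • (orbit i : E) - r ^ (i + 1) • (orbit (i + 1) : E) := by
    have horbit : r • (digit (orbit i) + orbit (i + 1) : E) = orbit i := by
      simpa only [orbit, Function.iterate_succ_apply'] using hnext (orbit i)
    rw [← horbit, smul_smul, ← pow_succ, smul_add, add_sub_cancel_right]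
  refine ⟨fun i ↦ digit (orbit i), fun i ↦ hdigit _, ?_⟩
  simp only [hterm]
  exact hasSum_pow_smul_sub_pow_succ_smul hr fun i ↦ hC _ (orbit i).2

theorem digitSums_eq_of_smul_add_eq [CompleteSpace E] (hr : ‖r‖ < 1) (hne : K.Nonempty)
    (hclosed : IsClosed K) (hbdd : Bornology.IsBounded K) (h : r • (D + K) = K) :
    digitSums r D = K :=
  (digitSums_subset hr hne hclosed h.subset).antisymm (subset_digitSums hr hbdd h.superset)

end DigitSums

theorem exists_natCast_abs_sub_le {m : ℕ} {R s : ℝ} (hR : 1 / 2 ≤ R)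
    (hs : |s - m / 2| ≤ m / 2 + R) : ∃ k ≤ m, |s - k| ≤ R := by
  obtain ⟨hlo, hhi⟩ := abs_le.mp hs
  rcases lt_or_ge s 0 with hneg | hnonneg
  · exact ⟨0, m.zero_le, abs_le.mpr ⟨by push_cast; linarith, by push_cast; linarith⟩⟩
  rcases lt_or_ge (m : ℝ) s with hlarge | hle
  · exact ⟨m, le_rfl, abs_le.mpr ⟨by linarith, by linarith⟩⟩
  have hfloor : (⌊s + 1 / 2⌋₊ : ℝ) ≤ s + 1 / 2 := Nat.floor_le (by linarith)
  have hlt : s + 1 / 2 < ⌊s + 1 / 2⌋₊ + 1 := Nat.lt_floor_add_one _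
  refine ⟨⌊s + 1 / 2⌋₊, ?_, abs_le.mpr ⟨by linarith, by linarith⟩⟩
  rw [← Nat.lt_succ_iff, ← Nat.cast_lt (α := ℝ)]
  push_cast
  linarith

theorem natCast_image_Iic_add_closedBall (m : ℕ) (p : ℝ) {R : ℝ} (hR : 1 / 2 ≤ R) :
    (Nat.cast '' Set.Iic m : Set ℝ) + closedBall p R = closedBall (m / 2 + p) (m / 2 + R) := by
  ext t
  simp only [Set.mem_add, Set.exists_mem_image, Set.mem_Iic, mem_closedBall, Real.dist_eq]
  constructor
  · rintro ⟨k, hk, y, hy, rfl⟩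
    have hkm : |(k : ℝ) - m / 2| ≤ m / 2 := by
      have : (k : ℝ) ≤ m := mod_cast hk
      exact abs_le.mpr ⟨by linarith [k.cast_nonneg (α := ℝ)], by linarith⟩
    calc |(k + y) - (m / 2 + p)| = |((k : ℝ) - m / 2) + (y - p)| := by ring_nf
      _ ≤ |(k : ℝ) - m / 2| + |y - p| := abs_add_le _ _
      _ ≤ m / 2 + R := add_le_add hkm hy
  · intro ht
    obtain ⟨k, hk, hdist⟩ : ∃ k ≤ m, |t - p - k| ≤ R :=
      exists_natCast_abs_sub_le hR (by rwa [sub_sub, add_comm p])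
    exact ⟨k, hk, t - k, by rwa [sub_right_comm], add_sub_cancel _ _⟩

theorem inv_smul_natCast_image_Iic_add_closedBall {β : ℝ} {m : ℕ} (hβ : 1 < |β|)
    (hm : |β| ≤ m + 1) :
    β⁻¹ • ((Nat.cast '' Set.Iic m : Set ℝ) +
        closedBall (m / (2 * (β - 1))) (m / (2 * (|β| - 1)))) =
      closedBall (m / (2 * (β - 1))) (m / (2 * (|β| - 1))) := by
  have hβ0 : β ≠ 0 := by rintro rfl; norm_num at hβ
  have hβ1 : β - 1 ≠ 0 := by rw [sub_ne_zero]; rintro rfl; norm_num at hβ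
  have habs0 : |β| ≠ 0 := abs_ne_zero.mpr hβ0
  have habs1 : 0 < |β| - 1 := sub_pos.mpr hβ
  have hradius : 1 / 2 ≤ m / (2 * (|β| - 1)) := by
    rw [div_le_div_iff₀ two_pos (by positivity)]
    linarith
  rw [natCast_image_Iic_add_closedBall m _ hradius, _root_.smul_closedBall _ _ (by positivity)]
  congr 1
  · rw [smul_eq_mul]
    field_simp
    ring
  · rw [norm_inv, Real.norm_eq_abs]
    field_simp
    ring

theorem setOf_hasSum_eq_digitSums (a β : ℝ) (m : ℕ) :
    {x : ℝ | ∃ d : ℕ → ℕ, (∀ i, d i ≤ m) ∧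
        HasSum (fun i : ℕ ↦ a * (d i : ℝ) * β ^ (-(i : ℤ) - 1)) x} =
      digitSums β⁻¹ (a • (Nat.cast '' Set.Iic m : Set ℝ)) := by
  have hpow (i : ℕ) : β ^ (-(i : ℤ) - 1) = β⁻¹ ^ (i + 1) := by
    rw [← zpow_natCast, inv_zpow', Nat.cast_succ, neg_add, sub_eq_add_neg]
  ext x
  rw [← Set.image_smul, Set.image_image, mem_digitSums_image]
  simp only [Set.mem_ofPred_eq, Set.mem_Iic, smul_eq_mul, hpow, mul_comm (a * _)]

theorem Omega_eq_Icc_general {β : ℝ} {m : ℕ} (a : ℝ) (hβ : 1 < |β|) (hm : |β| ≤ m + 1) :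
    {x : ℝ | ∃ d : ℕ → ℕ, (∀ i, d i ≤ m) ∧
        HasSum (fun i : ℕ ↦ a * (d i : ℝ) * β ^ (-(i : ℤ) - 1)) x} =
      Set.Icc (a * (m / (2 * (β - 1))) - |a| * (m / (2 * (|β| - 1))))
        (a * (m / (2 * (β - 1))) + |a| * (m / (2 * (|β| - 1)))) := by
  set c : ℝ := m / (2 * (β - 1))
  set R : ℝ := m / (2 * (|β| - 1))
  have hR : 0 ≤ R := div_nonneg m.cast_nonneg (by linarith)
  have hball : a • closedBall c R = closedBall (a * c) (|a| * R) := _root_.smul_closedBall a c hR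
  have hfixed : β⁻¹ • (a • (Nat.cast '' Set.Iic m : Set ℝ) + a • closedBall c R) =
      a • closedBall c R := by
    rw [← smul_add, smul_comm, inv_smul_natCast_image_Iic_add_closedBall hβ hm]
  have hr : ‖β⁻¹‖ < 1 := by
    rw [norm_inv]
    exact inv_lt_one_of_one_lt₀ hβ
  rw [hball] at hfixed
  rw [setOf_hasSum_eq_digitSums, ← Real.closedBall_eq_Icc]
  exact digitSums_eq_of_smul_add_eq hr (nonempty_closedBall.mpr (by positivity))
    isClosed_closedBall isBounded_closedBall hfixed

/-- `Ω` equals the closed interval `[-6/5, 4/5]`. -/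
theorem Omega_eq_Icc : Omega = Set.Icc (-6 / 5 : ℝ) (4 / 5) := by
  have habs : |(-3 / 2 : ℝ)| = 3 / 2 := by norm_num [abs_of_neg]
  refine (Omega_eq_Icc_general (1 / 2) ?_ ?_).trans ?_ <;> norm_num [habs]
end

section
/- Every real number x admits a (−3/2)-expansion: there exist k ∈ ℤ and digits d_i ∈ {0,1,2} for i ≤ k such that x = (1/2)·∑_{i=−∞}^{k} d_i·(−3/2)^i (the series taken over decreasing i converges absolutely). -/
/-!
Fix a base `-b` with `1 < b` and digits `0, …, m`. If `y ↦ -b * (y - δ y)` has a bounded orbit at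
`y`, where `δ` picks a digit, then the digits met along the orbit expand `y` in base `-b`: the
series telescopes. The numbers `∑ dⱼ (-b)^(-j)` all lie between `-mb / (b² - 1)` and
`mb² / (b² - 1)`, and when `b ≤ m + 1` the digit can be chosen so that this interval is mapped into
itself. The interval is a neighbourhood of `0`, so every real enters it after division by a power
of `-b`.
-/

open Filter Topology

/-- The shift map of the radix expansion in base `β` whose leading digit is selected by `δ`: it
removes the digit `δ y` of `β ^ 0` and moves the radix point one place. -/
def radixStep {K E : Type*} [DivisionRing K] [AddCommGroup E] [Module K E]
    (β : K) (δ : E → E) (y : E) : E :=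
  β • (y - δ y)

lemma inv_pow_smul_digit_iterate_radixStep {K E : Type*} [DivisionRing K] [AddCommGroup E]
    [Module K E] {β : K} (hβ : β ≠ 0) (δ : E → E) (y : E) (n : ℕ) :
    β⁻¹ ^ n • δ ((radixStep β δ)^[n] y) =
      β⁻¹ ^ n • (radixStep β δ)^[n] y - β⁻¹ ^ (n + 1) • (radixStep β δ)^[n + 1] y := by
  rw [Function.iterate_succ_apply', pow_succ, mul_smul, ← smul_sub, radixStep,
    inv_smul_smul₀ hβ, sub_sub_cancel]

lemma hasSum_sub_succ_of_summable_norm {E : Type*} [SeminormedAddCommGroup E] {u : ℕ → E}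
    (hu : Summable fun n => ‖u n‖) : HasSum (fun n => u n - u (n + 1)) (u 0) := by
  have hsub : Summable fun n => ‖u n - u (n + 1)‖ :=
    .of_nonneg_of_le (fun _ => norm_nonneg _) (fun _ => norm_sub_le _ _)
      (hu.add ((summable_nat_add_iff 1).2 hu))
  have hlim : Tendsto u atTop (𝓝 0) := tendsto_zero_iff_norm_tendsto_zero.2 hu.tendsto_atTop_zero
  rw [hasSum_iff_tendsto_nat_of_summable_norm hsub]
  simpa only [Finset.sum_range_sub', sub_zero] using hlim.const_sub (u 0)

theorem hasSum_digit_iterate_radixStep {𝕜 E : Type*} [NormedField 𝕜] [SeminormedAddCommGroup E]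
    [NormedSpace 𝕜 E] {β : 𝕜} (hβ : 1 < ‖β‖) {δ : E → E} {y : E}
    (hy : Bornology.IsBounded (Set.range fun n => (radixStep β δ)^[n] y)) :
    HasSum (fun n => β⁻¹ ^ n • δ ((radixStep β δ)^[n] y)) y := by
  have hβ₀ : β ≠ 0 := norm_pos_iff.1 (zero_lt_one.trans hβ)
  obtain ⟨C, hC⟩ := hy.exists_norm_le
  have hsummable : Summable fun n => ‖β⁻¹ ^ n • (radixStep β δ)^[n] y‖ := by
    have hgeom : Summable fun n => ‖β‖⁻¹ ^ n * C :=
      (summable_geometric_of_lt_one (by positivity) (inv_lt_one_of_one_lt₀ hβ)).mul_right C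
    refine .of_nonneg_of_le (fun _ => norm_nonneg _) (fun n => ?_) hgeom
    rw [norm_smul, norm_pow, norm_inv]
    gcongr
    exact hC _ ⟨n, rfl⟩
  simpa only [inv_pow_smul_digit_iterate_radixStep hβ₀, pow_zero, one_smul,
    Function.iterate_zero_apply] using hasSum_sub_succ_of_summable_norm hsummable

section NegBase

variable {b : ℝ} {m : ℕ} {y : ℝ}

/-- The interval whose endpoints are the least and the greatest sum `∑ dⱼ (-b)^(-j)`, `j ≥ 0`, with
digits `dⱼ ∈ {0, …, m}`. -/
def negBaseInterval (b : ℝ) (m : ℕ) : Set ℝ :=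
  Set.Icc (-(m * b / (b ^ 2 - 1))) (m * b ^ 2 / (b ^ 2 - 1))

/-- The leading digit in base `-b` with digits `0, …, m`: the least natural number `d` for which
`-b * (y - d)` is not below the left endpoint of `negBaseInterval b m`. -/
noncomputable def negBaseDigit (b : ℝ) (m : ℕ) (y : ℝ) : ℕ :=
  ⌈y - m / (b ^ 2 - 1)⌉₊

lemma negBaseDigit_le (hb : 1 < b) (hy : y ∈ negBaseInterval b m) : negBaseDigit b m y ≤ m := by
  have hb₂ : 0 < b ^ 2 - 1 := by nlinarith
  have hlength : m * b ^ 2 / (b ^ 2 - 1) - m / (b ^ 2 - 1) = m := by field_simp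
  exact Nat.ceil_le.2 (by linarith [hy.2])

lemma sub_negBaseDigit_le (b : ℝ) (m : ℕ) (y : ℝ) :
    y - negBaseDigit b m y ≤ m / (b ^ 2 - 1) :=
  sub_le_comm.1 (Nat.le_ceil _)

-- The interval `[-mb / (b² - 1), m / (b² - 1)]`, which `-b` scales to `negBaseInterval b m`, has
-- length `m / (b - 1) ≥ 1`, so subtracting digits one at a time cannot jump over it.
lemma le_sub_negBaseDigit (hb : 1 < b) (hbm : b ≤ m + 1) (hy : y ∈ negBaseInterval b m) :
    -(m * b / (b ^ 2 - 1)) ≤ y - negBaseDigit b m y := by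
  have hb₂ : 0 < b ^ 2 - 1 := by nlinarith
  rcases le_or_gt (y - m / (b ^ 2 - 1)) 0 with hle | hlt
  · simpa [negBaseDigit, Nat.ceil_eq_zero.2 hle] using hy.1
  · have hceil : (negBaseDigit b m y : ℝ) < y - m / (b ^ 2 - 1) + 1 := Nat.ceil_lt_add_one hlt.le
    have hlength : 1 ≤ m / (b ^ 2 - 1) + m * b / (b ^ 2 - 1) := by
      rw [← add_div, one_le_div hb₂]
      nlinarith
    linarith

lemma mapsTo_radixStep_negBaseInterval (hb : 1 < b) (hbm : b ≤ m + 1) :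
    Set.MapsTo (radixStep (-b) fun y : ℝ => (negBaseDigit b m y : ℝ))
      (negBaseInterval b m) (negBaseInterval b m) := by
  intro y hy
  have hb₀ : 0 ≤ b := by linarith
  have hupper := mul_le_mul_of_nonneg_left (sub_negBaseDigit_le b m y) hb₀
  have hlower := mul_le_mul_of_nonneg_left (le_sub_negBaseDigit hb hbm hy) hb₀
  rw [radixStep, smul_eq_mul, neg_mul]
  constructor
  · rw [mul_comm (m : ℝ), mul_div_assoc]
    exact neg_le_neg hupper
  · calc -(b * (y - negBaseDigit b m y)) ≤ b * (m * b / (b ^ 2 - 1)) := by linarith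
      _ = m * b ^ 2 / (b ^ 2 - 1) := by ring

lemma negBaseInterval_mem_nhds_zero (hb : 1 < b) (hm : 0 < m) : negBaseInterval b m ∈ 𝓝 0 := by
  have hb₂ : 0 < b ^ 2 - 1 := by nlinarith
  exact Icc_mem_nhds (neg_lt_zero.2 (by positivity)) (by positivity)

lemma exists_inv_pow_mul_mem_negBaseInterval (hb : 1 < b) (hm : 0 < m) (x : ℝ) :
    ∃ k : ℕ, (-b)⁻¹ ^ k * x ∈ negBaseInterval b m := by
  have hnorm : ‖(-b)⁻¹‖ < 1 := by
    rw [norm_inv, norm_neg, Real.norm_of_nonneg (by linarith)]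
    exact inv_lt_one_of_one_lt₀ hb
  have hlim : Tendsto (fun k : ℕ => (-b)⁻¹ ^ k * x) atTop (𝓝 0) := by
    simpa only [zero_mul] using (tendsto_pow_atTop_nhds_zero_of_norm_lt_one hnorm).mul_const x
  exact (hlim.eventually_mem (negBaseInterval_mem_nhds_zero hb hm)).exists

theorem exists_hasSum_inv_neg_pow_mul_of_mem_negBaseInterval (hb : 1 < b) (hbm : b ≤ m + 1)
    (hy : y ∈ negBaseInterval b m) :
    ∃ c : ℕ → ℕ, (∀ j, c j ≤ m) ∧ HasSum (fun j => (-b)⁻¹ ^ j * (c j : ℝ)) y := by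
  let T : ℝ → ℝ := radixStep (-b) fun y : ℝ => (negBaseDigit b m y : ℝ)
  have horbit (n : ℕ) : T^[n] y ∈ negBaseInterval b m :=
    (mapsTo_radixStep_negBaseInterval hb hbm).iterate n hy
  have hbase : 1 < ‖-b‖ := by rwa [norm_neg, Real.norm_of_nonneg (by linarith)]
  refine ⟨fun j => negBaseDigit b m (T^[j] y), fun j => negBaseDigit_le hb (horbit j), ?_⟩
  have hbounded : Bornology.IsBounded (Set.range fun n => T^[n] y) :=
    (Metric.isBounded_Icc _ _).subset (Set.range_subset_iff.2 horbit)
  simpa only [smul_eq_mul] using hasSum_digit_iterate_radixStep hbase hbounded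

theorem exists_hasSum_mul_neg_zpow (hb : 1 < b) (hbm : b ≤ m + 1) (x : ℝ) :
    ∃ (k : ℤ) (d : ℤ → ℕ), (∀ i ≤ k, d i ≤ m) ∧
      HasSum (fun j : ℕ => (d (k - j) : ℝ) * (-b) ^ (k - (j : ℤ))) x := by
  have hb₀ : -b ≠ 0 := by linarith
  have hm : 0 < m := by
    have : (0 : ℝ) < m := by linarith
    exact_mod_cast this
  obtain ⟨k, hk⟩ := exists_inv_pow_mul_mem_negBaseInterval hb hm x
  obtain ⟨c, hc, hsum⟩ := exists_hasSum_inv_neg_pow_mul_of_mem_negBaseInterval hb hbm hk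
  refine ⟨k, fun i => c (k - i).toNat, fun i _ => hc _, ?_⟩
  have hscaled := hsum.mul_left ((-b) ^ k)
  rw [inv_pow, mul_inv_cancel_left₀ (pow_ne_zero k hb₀)] at hscaled
  refine hscaled.congr_fun fun j => ?_
  simp only [sub_sub_cancel, Int.toNat_natCast, zpow_sub₀ hb₀, zpow_natCast, inv_pow]
  ring

end NegBase

/-- Every real number `x` admits a `(-3/2)`-expansion: there exist `k ∈ ℤ`
and digits `d i ∈ {0,1,2}` for `i ≤ k` such that
`x = (1/2)·∑_{i=-∞}^{k} d i·(-3/2)^i`, the series being taken over decreasing `i`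
(indexed by `j ∈ ℕ` via `i = k - j`). -/
theorem real_has_neg_three_halves_expansion (x : ℝ) :
    ∃ (k : ℤ) (d : ℤ → ℕ), (∀ i ≤ k, d i ≤ 2) ∧
      HasSum (fun j : ℕ => (1 / 2 : ℝ) * (d (k - j) : ℝ) * (-3 / 2 : ℝ) ^ (k - (j : ℤ))) x := by
  obtain ⟨k, d, hd, hsum⟩ :=
    exists_hasSum_mul_neg_zpow (b := 3 / 2) (m := 2) (by norm_num) (by norm_num) (2 * x)
  refine ⟨k, d, hd, ?_⟩
  simpa only [neg_div, mul_assoc, one_div, inv_mul_cancel_left₀ (two_ne_zero' ℝ)] using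
    hsum.mul_left (1 / 2 : ℝ)
end

section
/- The tile F satisfies the set equation (−3/2)·F = F ∪ (F + φ(1/2)) ∪ (F + φ(1)), where the action of −3/2 and the translations are taken componentwise in K = ℝ × ℚ₂. -/
/-- The diagonal embedding `φ : ℚ → K = ℝ × ℚ₂`, `φ(z) = (z, z)`. -/
noncomputable def phi (z : ℚ) : ℝ × ℚ_[2] := ((z : ℝ), (z : ℚ_[2]))

/-- The tile `F ⊂ K = ℝ × ℚ₂`: all points of the form
`(1/2)·∑_{i=1}^{∞} d_{-i}·φ(1)·(-3/2)^{-i}` with digits `d_{-i} ∈ {0,1,2}`, the series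
converging in `K` since multiplication by `(-3/2)⁻¹` contracts both coordinates. -/
noncomputable def Ftile : Set (ℝ × ℚ_[2]) :=
  {x : ℝ × ℚ_[2] | ∃ d : ℕ → ℕ, (∀ i, d i ≤ 2) ∧
    HasSum (fun i : ℕ => phi ((1 / 2 : ℚ) * (d i : ℚ) * (-3 / 2 : ℚ) ^ (-(i : ℤ) - 1))) x}

/-!
Multiplying `∑_{i ≥ 0} g⁻¹ ^ (i + 1) • d i` by `g` turns its leading term into the bare digit `d 0`
and its tail into the expansion with digits `d 1, d 2, …`. Conversely, any digit may be prepended to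
any expansion. Hence in a topological abelian group the tile `T` of a digit set `D` and a base `g`
acting by a continuous automorphism satisfies `g • T = D + T`; here the base is `-3/2` and the
digits are `φ(0), φ(1/2), φ(1)`.
-/

open scoped Pointwise

section DigitTile

variable {G M ι : Type*} [Group G] [AddCommMonoid M] [DistribMulAction G M] [TopologicalSpace M]

/-- The set of fractional parts in the number system with base `g` and digit set `D`: the points
`∑_{i ≥ 1} g⁻ⁱ • d_{-i}` with all `d_{-i} ∈ D`. The digit `d_{-i}` is encoded as `d (i - 1)`, and
only digit sequences whose expansion converges unconditionally contribute a point. -/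
def digitTile (g : G) (D : Set M) : Set M :=
  {x | ∃ d : ℕ → M, (∀ i, d i ∈ D) ∧ HasSum (fun i => g⁻¹ ^ (i + 1) • d i) x}

theorem mem_digitTile_image {g : G} {f : ι → M} {s : Set ι} {x : M} :
    x ∈ digitTile g (f '' s) ↔
      ∃ e : ℕ → ι, (∀ i, e i ∈ s) ∧ HasSum (fun i => g⁻¹ ^ (i + 1) • f (e i)) x := by
  constructor
  · rintro ⟨d, hd, hx⟩
    choose e he hfe using hd
    exact ⟨e, he, by simpa only [hfe] using hx⟩
  · rintro ⟨e, he, hx⟩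
    exact ⟨f ∘ e, fun i => Set.mem_image_of_mem f (he i), hx⟩

theorem hasSum_const_smul_iff [ContinuousConstSMul G M] {g : G} {f : ι → M} {x : M}
    {L : SummationFilter ι} : HasSum (fun i => g • f i) (g • x) L ↔ HasSum f x L :=
  ⟨fun h => by simpa only [inv_smul_smul] using h.const_smul g⁻¹, fun h => h.const_smul g⟩

end DigitTile

section SetEquation

variable {G M : Type*} [Group G] [AddCommGroup M] [DistribMulAction G M] [TopologicalSpace M]
  [IsTopologicalAddGroup M] [ContinuousConstSMul G M]

theorem hasSum_inv_pow_succ_smul_iff {g : G} {d : ℕ → M} {x : M} :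
    HasSum (fun i => g⁻¹ ^ (i + 1) • d i) x ↔
      HasSum (fun i => g⁻¹ ^ (i + 1) • d (i + 1)) (g • x - d 0) := by
  have smul_term (i : ℕ) : g • g⁻¹ ^ (i + 1) • d i = g⁻¹ ^ i • d i := by
    rw [pow_succ', mul_smul, smul_inv_smul]
  rw [← hasSum_const_smul_iff (g := g), ← hasSum_nat_add_iff' 1]
  simp only [smul_term, Finset.sum_range_one, pow_zero, one_smul]

theorem mem_digitTile_iff {g : G} {D : Set M} {x : M} :
    x ∈ digitTile g D ↔ ∃ a ∈ D, g • x - a ∈ digitTile g D := by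
  constructor
  · rintro ⟨d, hd, hx⟩
    exact ⟨d 0, hd 0, fun i => d (i + 1), fun i => hd (i + 1), hasSum_inv_pow_succ_smul_iff.1 hx⟩
  · rintro ⟨a, ha, d, hd, hx⟩
    exact ⟨fun | 0 => a | i + 1 => d i, fun | 0 => ha | i + 1 => hd i,
      hasSum_inv_pow_succ_smul_iff.2 hx⟩

theorem smul_digitTile (g : G) (D : Set M) : g • digitTile g D = D + digitTile g D := by
  ext y
  calc
    y ∈ g • digitTile g D ↔ g⁻¹ • y ∈ digitTile g D := Set.mem_smul_set_iff_inv_smul_mem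
    _ ↔ ∃ a ∈ D, y - a ∈ digitTile g D := by rw [mem_digitTile_iff, smul_inv_smul]
    _ ↔ y ∈ D + digitTile g D := by
      simp only [Set.mem_add, ← eq_sub_iff_add_eq', exists_eq_right]

end SetEquation

theorem phi_eq_algebraMap (z : ℚ) : phi z = algebraMap ℚ (ℝ × ℚ_[2]) z := by
  simp [phi]

theorem smul_phi (q z : ℚ) : q • phi z = phi (q * z) := by
  simp only [phi_eq_algebraMap, map_mul, Algebra.smul_def]

/-- The base `-3/2` of the tile `F`, as a unit of `ℚ` acting on `K = ℝ × ℚ₂`. -/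
def tileBase : ℚˣ := Units.mk0 (-3 / 2) (by norm_num)

theorem tileBase_smul (p : ℝ × ℚ_[2]) :
    tileBase • p = ((-3 / 2 : ℝ) * p.1, (-3 / 2 : ℚ_[2]) * p.2) := by
  simp [tileBase, Units.smul_def, Prod.ext_iff, Rat.smul_def]

theorem tileBase_inv_pow_smul_phi (i k : ℕ) :
    tileBase⁻¹ ^ (i + 1) • phi (k / 2) =
      phi ((1 / 2 : ℚ) * (k : ℚ) * (-3 / 2 : ℚ) ^ (-(i : ℤ) - 1)) := by
  have zpow_eq : (-3 / 2 : ℚ) ^ (-(i : ℤ) - 1) = ((-3 / 2)⁻¹) ^ (i + 1) := by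
    rw [← neg_add', ← Nat.cast_succ, zpow_neg, zpow_natCast, inv_pow]
  rw [Units.smul_def, smul_phi, zpow_eq, Units.val_pow_eq_pow_val, Units.val_inv_eq_inv_val,
    tileBase, Units.val_mk0]
  ring_nf

theorem Ftile_eq_digitTile_image :
    Ftile = digitTile tileBase ((fun k : ℕ => phi (k / 2)) '' Set.Iic 2) := by
  ext x
  simp only [Ftile, mem_digitTile_image, tileBase_inv_pow_smul_phi, Set.mem_Iic, Set.mem_ofPred_eq]

theorem image_phi_half_Iic_two :
    (fun k : ℕ => phi (k / 2)) '' Set.Iic 2 = {0, phi (1 / 2), phi 1} := by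
  have Iic_two : Set.Iic 2 = ({0, 1, 2} : Set ℕ) := by
    ext k
    simp only [Set.mem_Iic, Set.mem_insert_iff, Set.mem_singleton_iff]
    omega
  simp [Iic_two, Set.image_insert_eq, phi, Prod.mk_zero_zero]

theorem Ftile_eq_digitTile : Ftile = digitTile tileBase {0, phi (1 / 2), phi 1} := by
  rw [Ftile_eq_digitTile_image, image_phi_half_Iic_two]

theorem tileBase_smul_Ftile : tileBase • Ftile = {0, phi (1 / 2), phi 1} + Ftile := by
  simp only [Ftile_eq_digitTile, smul_digitTile]

/-- The tile `F` satisfies the set equation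
`(-3/2)·F = F ∪ (F + φ(1/2)) ∪ (F + φ(1))`, where the action of `-3/2` and the
translations are taken componentwise in `K = ℝ × ℚ₂`. -/
theorem Ftile_set_equation :
    (fun p : ℝ × ℚ_[2] => ((-3 / 2 : ℝ) * p.1, (-3 / 2 : ℚ_[2]) * p.2)) '' Ftile =
      Ftile ∪ (fun x => x + phi (1 / 2)) '' Ftile ∪ (fun x => x + phi 1) '' Ftile := by
  calc
    _ = tileBase • Ftile := by simp only [← tileBase_smul, Set.image_smul]
    _ = Ftile + {0, phi (1 / 2), phi 1} := by rw [tileBase_smul_Ftile, add_comm]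
    _ = Ftile ∪ (fun x => x + phi (1 / 2)) '' Ftile ∪ (fun x => x + phi 1) '' Ftile := by
      simp only [Set.insert_eq, Set.add_union, Set.add_singleton, add_zero, Set.image_id',
        Set.union_assoc]
end
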